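/- For every graphon W and every δ > 0, liminf_{n→∞} (log₂ N̂_□(n,δ;W)) / C(n,2) ≥ Ent(W), where C(n,2) = n(n-1)/2. -/

import Mathlib

open MeasureTheory Set Filter

noncomputable section

/-- A graphon: a symmetric measurable function `ℝ → ℝ → ℝ` with values in `[0,1]`
(only its values on `[0,1]²` matter). -/
def IsGraphon (W : ℝ → ℝ → ℝ) : Prop :=
  (∀ x y, W x y = W y x) ∧ Measurable (Function.uncurry W) ∧
    ∀ x y, W x y ∈ Set.Icc (0 : ℝ) 1

/-- The cut norm `‖U‖_□`, the supremum over measurable `S, T ⊆ [0,1]` of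
`|∫_{S×T} U|`. -/
def cutNorm (U : ℝ → ℝ → ℝ) : ℝ :=
  sSup { r : ℝ | ∃ S T : Set ℝ, MeasurableSet S ∧ MeasurableSet T ∧
    S ⊆ Set.Icc 0 1 ∧ T ⊆ Set.Icc 0 1 ∧
    r = |∫ p in S ×ˢ T, U p.1 p.2| }

/-- `d_□(W₁, W₂) = ‖W₁ - W₂‖_□`. -/
def dCut (W₁ W₂ : ℝ → ℝ → ℝ) : ℝ := cutNorm (fun x y => W₁ x y - W₂ x y)

/-- A Lebesgue-measure-preserving map `[0,1] → [0,1]`. -/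
def IsMPSelf (σ : ℝ → ℝ) : Prop :=
  MeasureTheory.MeasurePreserving σ
      (MeasureTheory.volume.restrict (Set.Icc (0:ℝ) 1))
      (MeasureTheory.volume.restrict (Set.Icc (0:ℝ) 1)) ∧
    Set.MapsTo σ (Set.Icc (0:ℝ) 1) (Set.Icc (0:ℝ) 1)

/-- The cut distance `δ_□(W₁, W₂)`. -/
def deltaCut (W₁ W₂ : ℝ → ℝ → ℝ) : ℝ :=
  sInf { r : ℝ | ∃ σ₁ σ₂ : ℝ → ℝ, IsMPSelf σ₁ ∧ IsMPSelf σ₂ ∧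
    r = cutNorm (fun x y => W₁ (σ₁ x) (σ₁ y) - W₂ (σ₂ x) (σ₂ y)) }

/-- The binary entropy function `h` (base-2 logarithm; `logb 2 0 = 0` by convention,
so `h 0 = h 1 = 0`). -/
def binEnt (x : ℝ) : ℝ := -x * Real.logb 2 x - (1 - x) * Real.logb 2 (1 - x)

/-- `h̃ x = h (min x (1/2))`. -/
def htilde (x : ℝ) : ℝ := binEnt (min x (1/2))

/-- The entropy `Ent(W) = ∫₀¹∫₀¹ h(W(x,y)) dx dy` of a graphon. -/
def graphonEnt (W : ℝ → ℝ → ℝ) : ℝ :=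
  ∫ x in Set.Icc (0:ℝ) 1, ∫ y in Set.Icc (0:ℝ) 1, binEnt (W x y)

open Classical in
/-- The graphon `W_G` of a simple graph `G` on `{1, …, n}` (vertices as `Fin n`,
vertex `i : Fin n` representing `i+1`): `W_G x y = 1` iff `⌈nx⌉⌈ny⌉ ∈ E(G)`. -/
def graphonOfGraph {n : ℕ} (G : SimpleGraph (Fin n)) : ℝ → ℝ → ℝ := fun x y =>
  if ∃ i j : Fin n, G.Adj i j ∧ ⌈(n : ℝ) * x⌉ = ((i : ℕ) : ℤ) + 1 ∧
      ⌈(n : ℝ) * y⌉ = ((j : ℕ) : ℤ) + 1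
  then 1 else 0

/-- A labelled graph class: a set of graphs on `{1,…,n}` for each `n`. -/
abbrev GraphClass := ∀ n : ℕ, Set (SimpleGraph (Fin n))

/-- A graph class is closed under relabelling by permutations. -/
def IsGraphClass (Q : GraphClass) : Prop :=
  ∀ (n : ℕ) (π : Equiv.Perm (Fin n)) (G : SimpleGraph (Fin n)),
    G ∈ Q n → G.comap ⇑π ∈ Q n

/-- A hereditary graph class: a graph class closed under taking induced subgraphs
(relabelled by the order-preserving bijection). -/
def IsHereditary (Q : GraphClass) : Prop :=
  IsGraphClass Q ∧
    ∀ (m n : ℕ) (f : Fin m → Fin n), StrictMono f →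
      ∀ G ∈ Q n, G.comap f ∈ Q m

/-- `Q̂`: the set of graphons which are limits (in cut distance) of sequences of graphs in
the class `Q` whose orders tend to infinity. -/
def limitSet (Q : GraphClass) : Set (ℝ → ℝ → ℝ) :=
  { W | IsGraphon W ∧
    ∃ (nk : ℕ → ℕ) (Gk : ∀ k, SimpleGraph (Fin (nk k))),
      (∀ k, Gk k ∈ Q (nk k)) ∧ Filter.Tendsto nk Filter.atTop Filter.atTop ∧
      Filter.Tendsto (fun k => deltaCut (graphonOfGraph (Gk k)) W) Filter.atTop (nhds 0) }

/-- `C(n,2) = n(n-1)/2` as a real number. -/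
def choose2 (n : ℕ) : ℝ := (n : ℝ) * ((n : ℝ) - 1) / 2

open Classical in
/-- The step function `E[W | P]` obtained by averaging `W` over the products of the
parts of the partition `P` of `[0,1]`. -/
def condExpPart {k : ℕ} (P : Fin k → Set ℝ) (W : ℝ → ℝ → ℝ) : ℝ → ℝ → ℝ := fun x y =>
  ∑ i : Fin k, ∑ j : Fin k,
    if x ∈ P i ∧ y ∈ P j then ⨍ p in (P i) ×ˢ (P j), W p.1 p.2 else 0

/-- `W̄_n`: the step function of `W` for the partition of `[0,1]` into `n` consecutive
intervals of length `1/n`. -/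
def barStep (n : ℕ) (W : ℝ → ℝ → ℝ) : ℝ → ℝ → ℝ :=
  condExpPart (fun i : Fin n => Set.Ioc (((i : ℕ) : ℝ)/n) ((((i : ℕ) : ℝ) + 1)/n)) W

/-- `N̂_□(n, δ; W)`: the number of graphs `G` on `{1,…,n}` with `d_□(W_G, W) ≤ δ`. -/
def NhatCut (n : ℕ) (δ : ℝ) (W : ℝ → ℝ → ℝ) : ℕ :=
  Nat.card {G : SimpleGraph (Fin n) // dCut (graphonOfGraph G) W ≤ δ}

/-- `N_□(n, δ; W)`: the number of graphs `G` on `{1,…,n}` with `δ_□(W_G, W) ≤ δ`. -/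
def NCut (n : ℕ) (δ : ℝ) (W : ℝ → ℝ → ℝ) : ℕ :=
  Nat.card {G : SimpleGraph (Fin n) // deltaCut (graphonOfGraph G) W ≤ δ}

open Classical in
/-- The induced density `p(F; W)` of a graph `F` on `{1,…,k}` in a graphon `W`. -/
def inducedDensity {k : ℕ} (F : SimpleGraph (Fin k)) (W : ℝ → ℝ → ℝ) : ℝ :=
  ∫ x : Fin k → ℝ in Set.univ.pi (fun _ : Fin k => Set.Icc (0:ℝ) 1),
    ∏ i : Fin k, ∏ j : Fin k,
      if i < j then (if F.Adj i j then W (x i) (x j) else 1 - W (x i) (x j)) else 1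

open Classical in
/-- The randomness support graphon `1_{rand(W)}` of `W`. -/
def randIndicator (W : ℝ → ℝ → ℝ) : ℝ → ℝ → ℝ := fun x y =>
  if 0 < W x y ∧ W x y < 1 then 1 else 0

/-- A kernel `U` is `K_r`-free if `∏_{i<j} U(x_i, x_j) = 0` for a.e. `x ∈ [0,1]^r`. -/
def KFree (r : ℕ) (U : ℝ → ℝ → ℝ) : Prop :=
  ∀ᵐ x ∂(MeasureTheory.volume.restrict (Set.univ.pi fun _ : Fin r => Set.Icc (0:ℝ) 1)),
    (∏ i : Fin r, ∏ j : Fin r, if i < j then U (x i) (x j) else 1) = 0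

open Classical in
/-- The graphon `W^{(r,s)}`: equal to `1/2` off the diagonal blocks, `1` on the first `s`
diagonal blocks `I_i × I_i`, and `0` on the remaining diagonal blocks. -/
def Wrs (r s : ℕ) : ℝ → ℝ → ℝ := fun x y =>
  if ∃ i j : Fin r, i ≠ j ∧ x ∈ Set.Ioc (((i:ℕ):ℝ)/r) ((((i:ℕ):ℝ)+1)/r) ∧
      y ∈ Set.Ioc (((j:ℕ):ℝ)/r) ((((j:ℕ):ℝ)+1)/r)
  then 1/2
  else if ∃ i : Fin r, (i:ℕ) < s ∧ x ∈ Set.Ioc (((i:ℕ):ℝ)/r) ((((i:ℕ):ℝ)+1)/r) ∧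
      y ∈ Set.Ioc (((i:ℕ):ℝ)/r) ((((i:ℕ):ℝ)+1)/r)
  then 1 else 0

/-- `E_r = ⋃_{i ≠ j} I_i × I_j` where `I_i`, `i = 1, …, r`, are the consecutive
intervals of length `1/r` in `[0,1]`. -/
def Er (r : ℕ) : Set (ℝ × ℝ) :=
  ⋃ (i : Fin r) (j : Fin r) (_ : i ≠ j),
    (Set.Ioc (((i:ℕ):ℝ)/r) ((((i:ℕ):ℝ)+1)/r)) ×ˢ (Set.Ioc (((j:ℕ):ℝ)/r) ((((j:ℕ):ℝ)+1)/r))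

/-- `R_r`: the set of graphons equal to `1/2` on `E_r` and `{0,1}`-valued elsewhere
on `[0,1]²`. -/
def Rset (r : ℕ) : Set (ℝ → ℝ → ℝ) :=
  { W | IsGraphon W ∧ (∀ p ∈ Er r, W p.1 p.2 = 1/2) ∧
      ∀ p ∈ ((Set.Icc (0:ℝ) 1) ×ˢ (Set.Icc (0:ℝ) 1)) \ Er r,
        W p.1 p.2 = 0 ∨ W p.1 p.2 = 1 }

/-- A graphon is random-free if it is `{0,1}`-valued a.e. on `[0,1]²`. -/
def IsRandomFree (W : ℝ → ℝ → ℝ) : Prop :=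
  ∀ᵐ p ∂(MeasureTheory.volume.restrict ((Set.Icc (0:ℝ) 1) ×ˢ (Set.Icc (0:ℝ) 1))),
    W (Prod.fst p) (Prod.snd p) = 0 ∨ W (Prod.fst p) (Prod.snd p) = 1

/-!
Let `n` be large and let `W̄` be the step function of `W` on the `n × n` grid, so that `W̄` is close
to `W` in `L¹`. Consider the random graph on `n` vertices whose edges are independent and whose edge
probabilities are the values of `W̄` on the cells.

With high probability its graphon is close to `W̄` in the cut norm. Indeed, by two applications of
the Cauchy–Schwarz inequality the fourth power of the cut norm of a step function is at most its
normalized four-cycle sum, and the expected four-cycle sum of `W_G - W̄` is `O(n³)`: a four-cycle on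
four distinct vertices contributes the product of four independent centred variables, hence zero.

On the other hand, the entropy of the random graph is the sum of the `h(p_e)`, which is at least
`C(n,2) Ent(W) - O(n)` because `h` is concave. A random variable that lies in a set `A` with high
probability cannot have much more entropy than `log |A|`, so the number of graphs close to `W` is at
least `2 ^ ((Ent(W) - o(1)) C(n,2))`.
-/

section Entropy

open Real

lemma sum_negMulLog_le {ι : Type*} (s : Finset ι) {p : ι → ℝ} (hp : ∀ i ∈ s, 0 ≤ p i) :
    ∑ i ∈ s, negMulLog (p i) ≤ negMulLog (∑ i ∈ s, p i) + (∑ i ∈ s, p i) * log s.card := by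
  obtain rfl | hs := s.eq_empty_or_nonempty
  · simp
  have hcard : (0 : ℝ) < s.card := by exact_mod_cast hs.card_pos
  have jensen := concaveOn_negMulLog.le_map_sum (t := s) (w := fun _ => (s.card : ℝ)⁻¹) (p := p)
    (fun _ _ => by positivity) (by simp [hcard.ne']) hp
  have negMulLog_inv : negMulLog (s.card : ℝ)⁻¹ = (s.card : ℝ)⁻¹ * log s.card := by
    rw [negMulLog, log_inv, neg_mul_neg]
  simp only [smul_eq_mul, ← Finset.mul_sum, negMulLog_mul, negMulLog_inv] at jensen
  refine le_of_mul_le_mul_left (jensen.trans_eq ?_) (inv_pos.2 hcard)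
  ring

/-- A form of Fano's inequality: revealing whether the outcome lies in `A` costs at most `log 2`,
after which at most `log |A|` remains inside `A` and at most `log |Ω|` outside. -/
lemma sum_negMulLog_le_log_card_add {Ω : Type*} [Fintype Ω] [DecidableEq Ω] {μ : Ω → ℝ}
    (hμ : ∀ ω, 0 ≤ μ ω) (hμ1 : ∑ ω, μ ω = 1) (A : Finset Ω) :
    ∑ ω, negMulLog (μ ω) ≤ log 2 + log A.card + (∑ ω ∈ Aᶜ, μ ω) * log (Fintype.card Ω) := by
  have split : ∑ ω ∈ A, μ ω = 1 - ∑ ω ∈ Aᶜ, μ ω := by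
    rw [← hμ1, ← Finset.sum_add_sum_compl A, add_sub_cancel_right]
  have inside := sum_negMulLog_le A fun ω _ => hμ ω
  have outside := sum_negMulLog_le Aᶜ fun ω _ => hμ ω
  have binary := binEntropy_le_log_two (p := ∑ ω ∈ Aᶜ, μ ω)
  rw [binEntropy_eq_negMulLog_add_negMulLog_one_sub, ← split] at binary
  have card_A : (∑ ω ∈ A, μ ω) * log A.card ≤ log A.card :=
    mul_le_of_le_one_left (log_natCast_nonneg _)
      (by linarith [Finset.sum_nonneg fun ω (_ : ω ∈ Aᶜ) => hμ ω])
  have card_compl : (∑ ω ∈ Aᶜ, μ ω) * log Aᶜ.card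
      ≤ (∑ ω ∈ Aᶜ, μ ω) * log (Fintype.card Ω) := by
    refine mul_le_mul_of_nonneg_left ?_ (Finset.sum_nonneg fun ω _ => hμ ω)
    obtain h | h := (Aᶜ).eq_empty_or_nonempty
    · simpa [h] using log_natCast_nonneg _
    · exact log_le_log (by exact_mod_cast h.card_pos) (by exact_mod_cast Aᶜ.card_le_univ)
  rw [← Finset.sum_add_sum_compl A]
  linarith

lemma binEnt_eq_binEntropy_div_log_two (x : ℝ) : binEnt x = binEntropy x / log 2 := by
  simp only [binEnt, binEntropy, logb, log_inv]
  ring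

end Entropy

section RandomGraph

open Real

variable {V : Type*} [Fintype V] [DecidableEq V]

open Classical in
lemma sum_prod_ite_mem_edgeSet {R : Type*} [CommSemiring R] (f g : Sym2 V → R) :
    ∑ G : SimpleGraph V, ∏ e ∈ (⊤ : SimpleGraph V).edgeFinset,
        (if e ∈ G.edgeSet then f e else g e)
      = ∏ e ∈ (⊤ : SimpleGraph V).edgeFinset, (f e + g e) := by
  rw [Finset.prod_add]
  refine Finset.sum_nbij' (fun G => G.edgeFinset) (fun t => SimpleGraph.fromEdgeSet t)
    (fun G _ => Finset.mem_powerset.2 (SimpleGraph.edgeFinset_mono le_top))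
    (fun _ _ => Finset.mem_univ _) (fun G _ => by simp) (fun t ht => ?_) (fun G _ => ?_)
  · have no_loops : Disjoint (t : Set (Sym2 V)) Sym2.diagSet := by
      rw [Set.disjoint_left]
      exact fun e he => SimpleGraph.not_isDiag_of_mem_edgeFinset (Finset.mem_powerset.1 ht he)
    simp [← Finset.coe_inj, no_loops]
  · rw [Finset.prod_ite]
    congr 2 <;> ext e
    · simpa using SimpleGraph.not_isDiag_of_mem_edgeSet G
    · simp

lemma card_simpleGraph :
    Fintype.card (SimpleGraph V) = 2 ^ (⊤ : SimpleGraph V).edgeFinset.card := by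
  have := sum_prod_ite_mem_edgeSet (V := V) (R := ℕ) (fun _ => 1) (fun _ => 1)
  simpa using this

open Classical in
/-- The probability of the graph `G` when each pair `e` of distinct vertices is an edge with
probability `p e`, independently of the others. -/
def bernoulliWeight (p : Sym2 V → ℝ) (G : SimpleGraph V) : ℝ :=
  ∏ e ∈ (⊤ : SimpleGraph V).edgeFinset, if e ∈ G.edgeSet then p e else 1 - p e

variable {p : Sym2 V → ℝ}

lemma bernoulliWeight_nonneg (hp : ∀ e, p e ∈ Icc (0 : ℝ) 1) (G : SimpleGraph V) :
    0 ≤ bernoulliWeight p G := by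
  refine Finset.prod_nonneg fun e _ => ?_
  split_ifs
  · exact (hp e).1
  · exact sub_nonneg.2 (hp e).2

open Classical in
lemma sum_bernoulliWeight_mul_prod (p f g : Sym2 V → ℝ) :
    ∑ G, bernoulliWeight p G *
        ∏ e ∈ (⊤ : SimpleGraph V).edgeFinset, (if e ∈ G.edgeSet then f e else g e)
      = ∏ e ∈ (⊤ : SimpleGraph V).edgeFinset, (p e * f e + (1 - p e) * g e) := by
  simp only [bernoulliWeight, ← Finset.prod_mul_distrib, ite_mul_ite, ← sum_prod_ite_mem_edgeSet]

lemma sum_bernoulliWeight (p : Sym2 V → ℝ) : ∑ G, bernoulliWeight p G = 1 := by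
  simpa using sum_bernoulliWeight_mul_prod p 1 1

open Classical in
lemma sum_bernoulliWeight_mul_ite (p : Sym2 V → ℝ) {e : Sym2 V} (he : ¬ e.IsDiag) (a b : ℝ) :
    ∑ G, bernoulliWeight p G * (if e ∈ G.edgeSet then a else b) = p e * a + (1 - p e) * b := by
  have he' : e ∈ (⊤ : SimpleGraph V).edgeFinset := by simpa using he
  convert sum_bernoulliWeight_mul_prod p (Function.update 1 e a) (Function.update 1 e b) using 1
  · refine Finset.sum_congr rfl fun G _ => ?_
    rw [Finset.prod_eq_single_of_mem e he' fun e' _ hne => by simp [hne]]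
    simp
  · rw [Finset.prod_eq_single_of_mem e he' fun e' _ hne => by simp [hne]]
    simp

lemma sum_negMulLog_bernoulliWeight (p : Sym2 V → ℝ) :
    ∑ G, negMulLog (bernoulliWeight p G)
      = ∑ e ∈ (⊤ : SimpleGraph V).edgeFinset, binEntropy (p e) := by
  classical
  have log_weight (G : SimpleGraph V) : negMulLog (bernoulliWeight p G) =
      ∑ e ∈ (⊤ : SimpleGraph V).edgeFinset,
        bernoulliWeight p G * (if e ∈ G.edgeSet then -log (p e) else -log (1 - p e)) := by
    rw [← Finset.mul_sum, negMulLog, neg_mul_comm]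
    by_cases h : bernoulliWeight p G = 0
    · simp [h]
    · rw [bernoulliWeight, log_prod (fun e he => Finset.prod_ne_zero_iff.1 h e he),
        ← Finset.sum_neg_distrib]
      simp only [apply_ite log, neg_ite]
  rw [Finset.sum_congr rfl fun G _ => log_weight G, Finset.sum_comm]
  refine Finset.sum_congr rfl fun e he => ?_
  rw [sum_bernoulliWeight_mul_ite p (SimpleGraph.not_isDiag_of_mem_edgeFinset he)]
  simp only [binEntropy, log_inv]

open Classical in
lemma sum_binEnt_le_logb_card_add (hp : ∀ e, p e ∈ Icc (0 : ℝ) 1) (A : Finset (SimpleGraph V)) :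
    ∑ e ∈ (⊤ : SimpleGraph V).edgeFinset, binEnt (p e) ≤ 1 + logb 2 A.card +
      (∑ G ∈ Aᶜ, bernoulliWeight p G) * (⊤ : SimpleGraph V).edgeFinset.card := by
  have fano := sum_negMulLog_le_log_card_add (bernoulliWeight_nonneg hp) (sum_bernoulliWeight p) A
  rw [sum_negMulLog_bernoulliWeight, card_simpleGraph, Nat.cast_pow, Nat.cast_two, log_pow] at fano
  have log2_pos : 0 < log 2 := log_pos one_lt_two
  simp only [binEnt_eq_binEntropy_div_log_two, ← Finset.sum_div]
  rw [div_le_iff₀ log2_pos, logb]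
  refine fano.trans_eq ?_
  field_simp

end RandomGraph

section FourCycleSum

variable {ι κ : Type*} [Fintype ι] [Fintype κ]

/-- The sum of `X i j * X i k * X l j * X l k` over all `i`, `l`, `j`, `k`, that is, the number of
homomorphisms of the four-cycle into the weighted bipartite graph `X`. It controls the cut norm of
`X`. The sum is written as that of the squared entries of `Xᵀ * X`. -/
def fourCycleSum (X : ι → κ → ℝ) : ℝ := ∑ j, ∑ k, (∑ i, X i j * X i k) ^ 2

lemma sq_sum_mul_le_card_mul {s x : ι → ℝ} (hs : ∀ i, |s i| ≤ 1) :
    (∑ i, s i * x i) ^ 2 ≤ Fintype.card ι * ∑ i, x i ^ 2 := by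
  refine (Finset.sum_mul_sq_le_sq_mul_sq _ s x).trans
    (mul_le_mul_of_nonneg_right ?_ (Finset.sum_nonneg fun i _ => sq_nonneg _))
  simpa using Finset.sum_le_card_nsmul Finset.univ (fun i => s i ^ 2) 1
    fun i _ => (sq_le_one_iff_abs_le_one _).2 (hs i)

lemma bilin_pow_four_le {s : ι → ℝ} {t : κ → ℝ} (hs : ∀ i, |s i| ≤ 1) (ht : ∀ j, |t j| ≤ 1)
    (X : ι → κ → ℝ) :
    (∑ i, ∑ j, X i j * (s i * t j)) ^ 4
      ≤ Fintype.card ι ^ 2 * Fintype.card κ ^ 2 * fourCycleSum X := by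
  have remove_s : (∑ i, ∑ j, X i j * (s i * t j)) ^ 2
      ≤ Fintype.card ι * ∑ i, (∑ j, X i j * t j) ^ 2 := by
    refine le_of_eq_of_le ?_ (sq_sum_mul_le_card_mul hs)
    simp only [Finset.mul_sum, mul_left_comm]
  have expand : ∑ i, (∑ j, X i j * t j) ^ 2
      = ∑ q : κ × κ, (t q.1 * t q.2) * ∑ i, X i q.1 * X i q.2 := by
    simp only [sq, Finset.sum_mul_sum, Fintype.sum_prod_type]
    rw [← Finset.sum_comm_cycle]
    simp only [Finset.mul_sum, mul_mul_mul_comm, mul_comm]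
  have remove_t : (∑ i, (∑ j, X i j * t j) ^ 2) ^ 2 ≤ Fintype.card κ ^ 2 * fourCycleSum X := by
    rw [expand]
    refine (sq_sum_mul_le_card_mul fun q => ?_).trans_eq ?_
    · rw [abs_mul]
      exact mul_le_one₀ (ht _) (abs_nonneg _) (ht _)
    · rw [fourCycleSum, Fintype.card_prod, Nat.cast_mul, sq, Fintype.sum_prod_type]
  calc (∑ i, ∑ j, X i j * (s i * t j)) ^ 4
      = ((∑ i, ∑ j, X i j * (s i * t j)) ^ 2) ^ 2 := by ring
    _ ≤ (Fintype.card ι * ∑ i, (∑ j, X i j * t j) ^ 2) ^ 2 := by gcongr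
    _ = Fintype.card ι ^ 2 * (∑ i, (∑ j, X i j * t j) ^ 2) ^ 2 := mul_pow _ _ _
    _ ≤ Fintype.card ι ^ 2 * (Fintype.card κ ^ 2 * fourCycleSum X) := by gcongr
    _ = Fintype.card ι ^ 2 * Fintype.card κ ^ 2 * fourCycleSum X := by ring

lemma fourCycleSum_nonneg (X : ι → κ → ℝ) : 0 ≤ fourCycleSum X :=
  Finset.sum_nonneg fun _ _ => Finset.sum_nonneg fun _ _ => sq_nonneg _

lemma fourCycleSum_eq_sum (X : ι → κ → ℝ) :
    fourCycleSum X = ∑ j, ∑ k, ∑ i, ∑ l, X i j * X i k * (X l j * X l k) := by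
  simp only [fourCycleSum, sq, Finset.sum_mul_sum]

end FourCycleSum

section EdgeDeviation

variable {V : Type*} {p : Sym2 V → ℝ}

open Classical in
/-- The centred indicator of the pair `e` being an edge of `G`. A loop `e`, which is never an
edge, is included with value `-p e`. -/
def edgeDeviation (p : Sym2 V → ℝ) (G : SimpleGraph V) (e : Sym2 V) : ℝ :=
  (if e ∈ G.edgeSet then 1 else 0) - p e

lemma abs_edgeDeviation_le_one (hp : ∀ e, p e ∈ Icc (0 : ℝ) 1) (G : SimpleGraph V) (e : Sym2 V) :
    |edgeDeviation p G e| ≤ 1 := by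
  obtain ⟨h0, h1⟩ := hp e
  rw [edgeDeviation, abs_le]
  split_ifs <;> constructor <;> linarith

variable [Fintype V]

/-- The four-cycle sum of the matrix of edge deviations of `G`. In the random graph with edge
probabilities `p` it is typically of smaller order than `|V| ^ 4`, and then the edges of `G` are
distributed quasirandomly with densities `p`. -/
def fourCycleDeviation (p : Sym2 V → ℝ) (G : SimpleGraph V) : ℝ :=
  fourCycleSum fun i j => edgeDeviation p G s(i, j)

variable [DecidableEq V]

lemma sum_bernoulliWeight_mul_prod_edgeDeviation (p : Sym2 V → ℝ) {s : Finset (Sym2 V)}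
    (hs : s ⊆ (⊤ : SimpleGraph V).edgeFinset) (hne : s.Nonempty) :
    ∑ G, bernoulliWeight p G * ∏ e ∈ s, edgeDeviation p G e = 0 := by
  classical
  have extend (G : SimpleGraph V) : ∏ e ∈ s, edgeDeviation p G e =
      ∏ e ∈ (⊤ : SimpleGraph V).edgeFinset,
        if e ∈ G.edgeSet then (if e ∈ s then 1 - p e else 1) else (if e ∈ s then -p e else 1) := by
    rw [← Finset.inter_eq_right.2 hs, ← Finset.prod_ite_mem, Finset.inter_eq_right.2 hs]
    refine Finset.prod_congr rfl fun e _ => ?_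
    rw [edgeDeviation]
    split_ifs <;> simp
  obtain ⟨e, he⟩ := hne
  simp only [extend, sum_bernoulliWeight_mul_prod]
  refine Finset.prod_eq_zero (hs he) ?_
  simp only [he, if_true]
  ring

lemma sum_bernoulliWeight_mul_four_cycle_eq_zero (p : Sym2 V → ℝ) {i j k l : V} (hij : i ≠ j)
    (hik : i ≠ k) (hlj : l ≠ j) (hlk : l ≠ k) (hjk : j ≠ k) (hil : i ≠ l) :
    ∑ G, bernoulliWeight p G * (edgeDeviation p G s(i, j) * edgeDeviation p G s(i, k) *
      (edgeDeviation p G s(l, j) * edgeDeviation p G s(l, k))) = 0 := by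
  have cycle_subset : ({s(i, j), s(i, k), s(l, j), s(l, k)} : Finset (Sym2 V))
      ⊆ (⊤ : SimpleGraph V).edgeFinset := by
    simp [Finset.insert_subset_iff, *]
  rw [← sum_bernoulliWeight_mul_prod_edgeDeviation p cycle_subset (Finset.insert_nonempty _ _)]
  refine Finset.sum_congr rfl fun G _ => ?_
  rw [Finset.prod_insert, Finset.prod_insert, Finset.prod_insert, Finset.prod_singleton, mul_assoc]
  all_goals simp [*, Ne.symm]

lemma sum_bernoulliWeight_mul_le_one (hp : ∀ e, p e ∈ Icc (0 : ℝ) 1) {F : SimpleGraph V → ℝ}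
    (hF : ∀ G, F G ≤ 1) : ∑ G, bernoulliWeight p G * F G ≤ 1 :=
  (Finset.sum_le_sum fun G _ =>
    mul_le_of_le_one_right (bernoulliWeight_nonneg hp G) (hF G)).trans_eq (sum_bernoulliWeight p)

lemma sum_bernoulliWeight_mul_four_cycle_le (hp : ∀ e, p e ∈ Icc (0 : ℝ) 1) (i j k l : V) :
    ∑ G, bernoulliWeight p G * (edgeDeviation p G s(i, j) * edgeDeviation p G s(i, k) *
        (edgeDeviation p G s(l, j) * edgeDeviation p G s(l, k)))
      ≤ (if i = j then 1 else 0) + (if i = k then 1 else 0) + (if l = j then 1 else 0) +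
        (if l = k then 1 else 0) + (if j = k then 1 else 0) + (if i = l then 1 else 0) := by
  have le_one : ∑ G, bernoulliWeight p G * (edgeDeviation p G s(i, j) * edgeDeviation p G s(i, k) *
      (edgeDeviation p G s(l, j) * edgeDeviation p G s(l, k))) ≤ 1 := by
    refine sum_bernoulliWeight_mul_le_one hp fun G => (le_abs_self _).trans ?_
    simp only [abs_mul]
    have := abs_edgeDeviation_le_one hp G
    exact mul_le_one₀ (mul_le_one₀ (this _) (abs_nonneg _) (this _)) (by positivity)
      (mul_le_one₀ (this _) (abs_nonneg _) (this _))
  by_cases distinct : i ≠ j ∧ i ≠ k ∧ l ≠ j ∧ l ≠ k ∧ j ≠ k ∧ i ≠ l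
  · obtain ⟨hij, hik, hlj, hlk, hjk, hil⟩ := distinct
    rw [sum_bernoulliWeight_mul_four_cycle_eq_zero p hij hik hlj hlk hjk hil]
    positivity
  · refine le_one.trans ?_
    have ite_nonneg (P : Prop) [Decidable P] : (0 : ℝ) ≤ if P then 1 else 0 := by positivity
    simp only [not_and_or, not_not] at distinct
    rcases distinct with h | h | h | h | h | h <;> rw [if_pos h] <;> linarith [ite_nonneg (i = j),
      ite_nonneg (i = k), ite_nonneg (l = j), ite_nonneg (l = k), ite_nonneg (j = k),
      ite_nonneg (i = l)]

lemma sum_bernoulliWeight_mul_fourCycleDeviation_le (hp : ∀ e, p e ∈ Icc (0 : ℝ) 1) :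
    ∑ G, bernoulliWeight p G * fourCycleDeviation p G
      ≤ 6 * Fintype.card V ^ 3 := by
  calc ∑ G, bernoulliWeight p G * fourCycleDeviation p G
      = ∑ j, ∑ k, ∑ i, ∑ l, ∑ G, bernoulliWeight p G *
          (edgeDeviation p G s(i, j) * edgeDeviation p G s(i, k) *
            (edgeDeviation p G s(l, j) * edgeDeviation p G s(l, k))) := by
        simp only [fourCycleDeviation, fourCycleSum_eq_sum, Finset.mul_sum,
          Finset.sum_comm (s := Finset.univ (α := SimpleGraph V))]
    _ ≤ ∑ j, ∑ k, ∑ i, ∑ l : V, ((if i = j then 1 else 0) + (if i = k then 1 else 0) +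
          (if l = j then 1 else 0) + (if l = k then 1 else 0) + (if j = k then 1 else 0) +
          (if i = l then (1 : ℝ) else 0)) := by
        gcongr
        exact sum_bernoulliWeight_mul_four_cycle_le hp _ _ _ _
    _ = 6 * Fintype.card V ^ 3 := by
        simp only [Finset.sum_add_distrib, Finset.sum_ite_eq, Finset.sum_ite_eq', Finset.mem_univ,
          if_true, Finset.sum_const, Finset.card_univ, nsmul_eq_mul, ← Finset.mul_sum, mul_one]
        ring

open Classical in
lemma sum_bernoulliWeight_fourCycleDeviation_gt_le (hp : ∀ e, p e ∈ Icc (0 : ℝ) 1) {c : ℝ}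
    (hc : 0 < c) :
    ∑ G with c < fourCycleDeviation p G, bernoulliWeight p G
      ≤ 6 * Fintype.card V ^ 3 / c := by
  rw [le_div_iff₀ hc, Finset.sum_mul]
  refine le_trans ?_ (sum_bernoulliWeight_mul_fourCycleDeviation_le hp)
  calc _ ≤ ∑ G with c < fourCycleDeviation p G,
        bernoulliWeight p G * fourCycleDeviation p G :=
      Finset.sum_le_sum fun G hG => mul_le_mul_of_nonneg_left (Finset.mem_filter.1 hG).2.le
        (bernoulliWeight_nonneg hp G)
    _ ≤ _ := Finset.sum_le_univ_sum_of_nonneg fun G =>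
        mul_nonneg (bernoulliWeight_nonneg hp G) (fourCycleSum_nonneg _)

end EdgeDeviation

section Pairs

variable {V : Type*} [Fintype V] [DecidableEq V]

lemma sum_offDiag_sym2_mk {M : Type*} [AddCommMonoid M] (f : Sym2 V → M) :
    ∑ q ∈ (Finset.univ : Finset V).offDiag, f s(q.1, q.2)
      = 2 • ∑ e ∈ (⊤ : SimpleGraph V).edgeFinset, f e := by
  have darts : ∑ q ∈ (Finset.univ : Finset V).offDiag, f s(q.1, q.2)
      = ∑ d : (⊤ : SimpleGraph V).Dart, f d.edge :=
    Finset.sum_bij' (fun q hq => ⟨q, (Finset.mem_offDiag.1 hq).2.2⟩) (fun d _ => d.toProd)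
      (by simp) (fun d _ => by simp) (by simp) (by simp) (fun _ _ => rfl)
  rw [darts, Finset.smul_sum, ← Finset.sum_fiberwise_of_maps_to
    (fun d _ => SimpleGraph.mem_edgeFinset.2 d.edge_mem)]
  refine Finset.sum_congr rfl fun e he => ?_
  rw [Finset.sum_congr rfl fun d hd => congrArg f (Finset.mem_filter.1 hd).2, Finset.sum_const,
    SimpleGraph.dart_edge_fiber_card _ e (SimpleGraph.mem_edgeFinset.1 he)]

lemma sum_sum_sym2_mk {M : Type*} [AddCommMonoid M] (f : Sym2 V → M) :
    ∑ i, ∑ j, f s(i, j) = ∑ i, f s(i, i) + 2 • ∑ e ∈ (⊤ : SimpleGraph V).edgeFinset, f e := by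
  rw [← Fintype.sum_prod_type', ← Finset.univ_product_univ, ← Finset.diag_union_offDiag,
    Finset.sum_union (Finset.disjoint_diag_offDiag _), Finset.sum_diag, sum_offDiag_sym2_mk]

lemma card_edgeFinset_top_fin (n : ℕ) :
    ((⊤ : SimpleGraph (Fin n)).edgeFinset.card : ℝ) = choose2 n := by
  rw [SimpleGraph.card_edgeFinset_top_eq_card_choose_two, Fintype.card_fin, Nat.cast_choose_two,
    choose2]

end Pairs

section Grid

variable {n : ℕ}

/-- The `i`-th of the `n` consecutive intervals of length `1/n` that partition `(0,1]`. -/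
def gridInterval (n : ℕ) (i : Fin n) : Set ℝ := Ioc ((i : ℕ) / n : ℝ) (((i : ℕ) + 1) / n)

lemma measurableSet_gridInterval (i : Fin n) : MeasurableSet (gridInterval n i) :=
  measurableSet_Ioc

lemma mem_gridInterval_iff {i : Fin n} {x : ℝ} : x ∈ gridInterval n i ↔ ⌈n * x⌉ = (i : ℤ) + 1 := by
  have hn : (0 : ℝ) < n := by exact_mod_cast i.pos
  rw [gridInterval, mem_Ioc, div_lt_iff₀ hn, le_div_iff₀ hn, Int.ceil_eq_iff, mul_comm x]
  simp

lemma eq_of_mem_gridInterval {i j : Fin n} {x : ℝ} (hi : x ∈ gridInterval n i)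
    (hj : x ∈ gridInterval n j) : i = j := by
  rw [mem_gridInterval_iff] at hi hj
  exact Fin.ext (by omega)

lemma iUnion_gridInterval (hn : n ≠ 0) : ⋃ i, gridInterval n i = Ioc 0 1 := by
  have hn' : (0 : ℝ) < n := by positivity
  ext x
  simp only [mem_iUnion, mem_gridInterval_iff]
  constructor
  · rintro ⟨i, hi⟩
    have ceil_pos : 0 < ⌈n * x⌉ := by omega
    have ceil_le : ⌈n * x⌉ ≤ n := by omega
    exact ⟨pos_of_mul_pos_right (Int.ceil_pos.1 ceil_pos) hn'.le,
      le_of_mul_le_mul_left (by simpa using Int.ceil_le.1 ceil_le) hn'⟩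
  · rintro ⟨hx0, hx1⟩
    have ceil_pos : 0 < ⌈n * x⌉ := Int.ceil_pos.2 (by positivity)
    have ceil_le : ⌈n * x⌉ ≤ n := Int.ceil_le.2 (by simpa using mul_le_of_le_one_right hn'.le hx1)
    exact ⟨⟨(⌈n * x⌉ - 1).toNat, by omega⟩, by simp; omega⟩

lemma volume_real_gridInterval (i : Fin n) : volume.real (gridInterval n i) = (n : ℝ)⁻¹ := by
  have hn : (0 : ℝ) < n := by exact_mod_cast i.pos
  rw [gridInterval, Real.volume_real_Ioc_of_le (by gcongr; linarith)]
  ring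

/-- The cell of the `n × n` grid on `(0,1]²` in column `q.1` and row `q.2`. -/
def gridBlock (n : ℕ) (q : Fin n × Fin n) : Set (ℝ × ℝ) := gridInterval n q.1 ×ˢ gridInterval n q.2

lemma measurableSet_gridBlock (q : Fin n × Fin n) : MeasurableSet (gridBlock n q) :=
  (measurableSet_gridInterval _).prod (measurableSet_gridInterval _)

lemma volume_real_gridBlock (q : Fin n × Fin n) :
    volume.real (gridBlock n q) = ((n : ℝ) ^ 2)⁻¹ := by
  rw [gridBlock, Measure.volume_eq_prod, measureReal_prod_prod, volume_real_gridInterval,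
    volume_real_gridInterval, sq, mul_inv]

lemma pairwise_disjoint_gridBlock : Pairwise (Function.onFun Disjoint (gridBlock n)) := by
  refine fun q q' hne => Set.disjoint_left.2 fun z hz hz' => hne ?_
  exact Prod.ext (eq_of_mem_gridInterval hz.1 hz'.1) (eq_of_mem_gridInterval hz.2 hz'.2)

/-- The square `[0,1]²`, the domain of a graphon. -/
abbrev unitSquare : Set (ℝ × ℝ) := Icc 0 1 ×ˢ Icc 0 1

lemma volume_unitSquare_ne_top : volume unitSquare ≠ ⊤ :=
  (isCompact_Icc.prod isCompact_Icc).measure_ne_top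

lemma iUnion_gridBlock (hn : n ≠ 0) : ⋃ q, gridBlock n q = Ioc 0 1 ×ˢ Ioc 0 1 := by
  ext z
  simp only [gridBlock, ← iUnion_gridInterval hn, mem_iUnion, mem_prod, Prod.exists,
    exists_and_left, exists_and_right]

lemma gridBlock_subset_unitSquare (q : Fin n × Fin n) : gridBlock n q ⊆ unitSquare :=
  (subset_iUnion _ q).trans ((iUnion_gridBlock q.1.pos.ne').trans_subset
    (prod_mono Ioc_subset_Icc_self Ioc_subset_Icc_self))

lemma measure_gridBlock_ne_top (q : Fin n × Fin n) : volume (gridBlock n q) ≠ ⊤ :=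
  measure_ne_top_of_subset (gridBlock_subset_unitSquare q) volume_unitSquare_ne_top

lemma iUnion_gridBlock_ae_eq (hn : n ≠ 0) : ⋃ q, gridBlock n q =ᵐ[volume] unitSquare := by
  rw [iUnion_gridBlock hn]
  exact Measure.set_prod_ae_eq Ioc_ae_eq_Icc Ioc_ae_eq_Icc

lemma setIntegral_unitSquare_eq_sum (hn : n ≠ 0) {f : ℝ × ℝ → ℝ} (hf : IntegrableOn f unitSquare) :
    ∫ z in unitSquare, f z = ∑ q, ∫ z in gridBlock n q, f z := by
  rw [← setIntegral_congr_set (iUnion_gridBlock_ae_eq hn),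
    integral_iUnion_fintype measurableSet_gridBlock pairwise_disjoint_gridBlock
      fun q => hf.mono_set (gridBlock_subset_unitSquare q)]

end Grid

section StepKernel

variable {n : ℕ}

open Classical in
/-- The step function on the `n × n` grid taking the value `X i j` on the cell `(i, j)`. -/
def stepKernel (X : Fin n → Fin n → ℝ) : ℝ → ℝ → ℝ := fun x y =>
  ∑ i, ∑ j, if x ∈ gridInterval n i ∧ y ∈ gridInterval n j then X i j else 0

/-- The mean value of `W` on the cell `(i, j)` of the `n × n` grid. -/
def blockAverage (n : ℕ) (W : ℝ → ℝ → ℝ) (i j : Fin n) : ℝ :=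
  ⨍ z in gridBlock n (i, j), W z.1 z.2

lemma barStep_eq_stepKernel (n : ℕ) (W : ℝ → ℝ → ℝ) :
    barStep n W = stepKernel (blockAverage n W) := rfl

lemma stepKernel_apply_of_mem (X : Fin n → Fin n → ℝ) {i j : Fin n} {x y : ℝ}
    (hx : x ∈ gridInterval n i) (hy : y ∈ gridInterval n j) : stepKernel X x y = X i j := by
  rw [stepKernel, Fintype.sum_eq_single i fun i' hi' => ?_,
    Fintype.sum_eq_single j fun j' hj' => ?_, if_pos ⟨hx, hy⟩]
  · exact if_neg fun h => hj' (eq_of_mem_gridInterval h.2 hy)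
  · exact Finset.sum_eq_zero fun j' _ => if_neg fun h => hi' (eq_of_mem_gridInterval h.1 hx)

lemma stepKernel_sub (X Y : Fin n → Fin n → ℝ) (x y : ℝ) :
    stepKernel X x y - stepKernel Y x y = stepKernel (fun i j => X i j - Y i j) x y := by
  simp only [stepKernel, ← Finset.sum_sub_distrib, ite_sub_ite, sub_zero]

lemma stepKernel_eq_sum_indicator (X : Fin n → Fin n → ℝ) (z : ℝ × ℝ) :
    stepKernel X z.1 z.2 = ∑ q, (gridBlock n q).indicator (fun _ => X q.1 q.2) z := by
  classical
  simp only [Fintype.sum_prod_type, stepKernel, indicator_apply, gridBlock, mem_prod]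

lemma integrableOn_stepKernel (X : Fin n → Fin n → ℝ) {s : Set (ℝ × ℝ)} (hs : volume s ≠ ⊤) :
    IntegrableOn (fun z : ℝ × ℝ => stepKernel X z.1 z.2) s := by
  simp only [stepKernel_eq_sum_indicator]
  exact integrable_finsetSum _ fun q _ =>
    (integrableOn_const hs).indicator (measurableSet_gridBlock q)

lemma setIntegral_prod_stepKernel (X : Fin n → Fin n → ℝ) {S T : Set ℝ}
    (hS : volume S ≠ ⊤) (hT : volume T ≠ ⊤) :
    ∫ z in S ×ˢ T, stepKernel X z.1 z.2 = ∑ i, ∑ j, X i j *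
      (volume.real (gridInterval n i ∩ S) * volume.real (gridInterval n j ∩ T)) := by
  have integrable_cell (q : Fin n × Fin n) :
      IntegrableOn ((gridBlock n q).indicator fun _ => X q.1 q.2) (S ×ˢ T) := by
    refine (integrableOn_const ?_).indicator (measurableSet_gridBlock q)
    rw [Measure.volume_eq_prod, Measure.prod_prod]
    exact ENNReal.mul_ne_top hS hT
  simp only [stepKernel_eq_sum_indicator]
  rw [integral_finsetSum _ fun q _ => integrable_cell q, Fintype.sum_prod_type]
  refine Finset.sum_congr rfl fun i _ => Finset.sum_congr rfl fun j _ => ?_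
  rw [integral_indicator_const _ (measurableSet_gridBlock _), smul_eq_mul, mul_comm,
    measureReal_restrict_apply (measurableSet_gridBlock _), gridBlock, prod_inter_prod,
    Measure.volume_eq_prod, measureReal_prod_prod]

lemma abs_card_mul_volume_real_gridInterval_inter_le (i : Fin n) (S : Set ℝ) :
    |n * volume.real (gridInterval n i ∩ S)| ≤ 1 := by
  have hn : (0 : ℝ) < n := by exact_mod_cast i.pos
  have vol_le : volume.real (gridInterval n i ∩ S) ≤ (n : ℝ)⁻¹ :=
    (measureReal_mono inter_subset_left measure_Ioc_lt_top.ne).trans_eq (volume_real_gridInterval i)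
  rw [abs_of_nonneg (by positivity)]
  exact (mul_le_mul_of_nonneg_left vol_le hn.le).trans_eq (mul_inv_cancel₀ hn.ne')

lemma abs_setIntegral_prod_stepKernel_le (hn : n ≠ 0) {X : Fin n → Fin n → ℝ} {η : ℝ} (hη : 0 ≤ η)
    (hX : fourCycleSum X ≤ η ^ 4 * n ^ 4) {S T : Set ℝ} (hS : volume S ≠ ⊤) (hT : volume T ≠ ⊤) :
    |∫ z in S ×ˢ T, stepKernel X z.1 z.2| ≤ η := by
  have scaled : n ^ 2 * ∫ z in S ×ˢ T, stepKernel X z.1 z.2 = ∑ i, ∑ j, X i j *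
      (n * volume.real (gridInterval n i ∩ S) * (n * volume.real (gridInterval n j ∩ T))) := by
    rw [setIntegral_prod_stepKernel X hS hT]
    simp only [Finset.mul_sum]
    exact Finset.sum_congr rfl fun i _ => Finset.sum_congr rfl fun j _ => by ring
  have bilin := bilin_pow_four_le (abs_card_mul_volume_real_gridInterval_inter_le · S)
    (abs_card_mul_volume_real_gridInterval_inter_le · T) X
  rw [← scaled, Fintype.card_fin] at bilin
  have pow_four_le : (n ^ 8 : ℝ) * |∫ z in S ×ˢ T, stepKernel X z.1 z.2| ^ 4 ≤ n ^ 8 * η ^ 4 :=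
    calc (n ^ 8 : ℝ) * |∫ z in S ×ˢ T, stepKernel X z.1 z.2| ^ 4
        = (n ^ 2 * ∫ z in S ×ˢ T, stepKernel X z.1 z.2) ^ 4 := by
          rw [Even.pow_abs (by decide)]; ring
      _ ≤ n ^ 2 * n ^ 2 * (η ^ 4 * n ^ 4) := bilin.trans (by gcongr)
      _ = n ^ 8 * η ^ 4 := by ring
  exact le_of_pow_le_pow_left₀ four_ne_zero hη (le_of_mul_le_mul_left pow_four_le (by positivity))

end StepKernel

section CutDistance

variable {n : ℕ} {W : ℝ → ℝ → ℝ}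

lemma blockAverage_comm (hW : ∀ x y, W x y = W y x) (i j : Fin n) :
    blockAverage n W i j = blockAverage n W j i := by
  simp only [blockAverage, setAverage_eq, volume_real_gridBlock]
  congr 1
  rw [gridBlock, gridBlock, Measure.volume_eq_prod, ← setIntegral_prod_swap]
  simp only [Prod.fst_swap, Prod.snd_swap, hW]

/-- The edge probabilities of the random graph on `n` vertices associated with a graphon: the pair
`s(i, j)` is an edge with probability the mean value of the graphon on the cell `(i, j)`. -/
def IsGraphon.pairDensity (hW : IsGraphon W) (n : ℕ) : Sym2 (Fin n) → ℝ :=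
  Sym2.lift ⟨blockAverage n W, blockAverage_comm hW.1⟩

lemma IsGraphon.pairDensity_mk (hW : IsGraphon W) (i j : Fin n) :
    hW.pairDensity n s(i, j) = blockAverage n W i j := rfl

open Classical in
lemma graphonOfGraph_eq_stepKernel (G : SimpleGraph (Fin n)) (x y : ℝ) :
    graphonOfGraph G x y = stepKernel (fun i j => if s(i, j) ∈ G.edgeSet then 1 else 0) x y := by
  simp only [graphonOfGraph, ← mem_gridInterval_iff, SimpleGraph.mem_edgeSet]
  split_ifs with h
  · obtain ⟨i, j, hij, hx, hy⟩ := h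
    rw [stepKernel_apply_of_mem _ hx hy, if_pos hij]
  · refine (Finset.sum_eq_zero fun i _ => Finset.sum_eq_zero fun j _ => ?_).symm
    rw [← ite_and]
    exact if_neg fun hij => h ⟨i, j, hij.2, hij.1⟩

lemma graphonOfGraph_sub_barStep (hW : IsGraphon W) (G : SimpleGraph (Fin n)) (x y : ℝ) :
    graphonOfGraph G x y - barStep n W x y
      = stepKernel (fun i j => edgeDeviation (hW.pairDensity n) G s(i, j)) x y := by
  rw [graphonOfGraph_eq_stepKernel, barStep_eq_stepKernel, stepKernel_sub]
  rfl

lemma cutNorm_le {U : ℝ → ℝ → ℝ} {c : ℝ}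
    (h : ∀ S T : Set ℝ, S ⊆ Icc 0 1 → T ⊆ Icc 0 1 → |∫ z in S ×ˢ T, U z.1 z.2| ≤ c) :
    cutNorm U ≤ c := by
  refine csSup_le ⟨_, ∅, ∅, .empty, .empty, empty_subset _, empty_subset _, rfl⟩ ?_
  rintro _ ⟨S, T, -, -, hS, hT, rfl⟩
  exact h S T hS hT

lemma IsGraphon.integrableOn_comp (hW : IsGraphon W) {φ : ℝ → ℝ} (hφ : Measurable φ) {c : ℝ}
    (hφc : ∀ x ∈ Icc (0 : ℝ) 1, |φ x| ≤ c) :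
    IntegrableOn (fun z : ℝ × ℝ => φ (W z.1 z.2)) unitSquare :=
  Measure.integrableOn_of_bounded volume_unitSquare_ne_top
    (hφ.comp hW.2.1).aestronglyMeasurable (ae_of_all _ fun _ => hφc _ (hW.2.2 _ _))

lemma IsGraphon.integrableOn (hW : IsGraphon W) :
    IntegrableOn (fun z : ℝ × ℝ => W z.1 z.2) unitSquare :=
  hW.integrableOn_comp measurable_id fun _ hx => abs_le.2 ⟨neg_one_lt_zero.le.trans hx.1, hx.2⟩

lemma dCut_graphonOfGraph_le (hn : n ≠ 0) (hW : IsGraphon W) {G : SimpleGraph (Fin n)} {η : ℝ}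
    (hη : 0 ≤ η) (hG : fourCycleDeviation (hW.pairDensity n) G ≤ η ^ 4 * n ^ 4) :
    dCut (graphonOfGraph G) W ≤ η + ∫ z in unitSquare, |barStep n W z.1 z.2 - W z.1 z.2| := by
  have error_integrable : IntegrableOn (fun z => barStep n W z.1 z.2 - W z.1 z.2) unitSquare :=
    (integrableOn_stepKernel _ volume_unitSquare_ne_top).sub hW.integrableOn
  refine cutNorm_le fun S T hS hT => ?_
  have volume_ne_top {S : Set ℝ} (hS : S ⊆ Icc 0 1) : volume S ≠ ⊤ :=
    measure_ne_top_of_subset hS measure_Icc_lt_top.ne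
  have hST : S ×ˢ T ⊆ unitSquare := prod_mono hS hT
  have decompose : ∫ z in S ×ˢ T, (graphonOfGraph G z.1 z.2 - W z.1 z.2)
      = (∫ z in S ×ˢ T,
          stepKernel (fun i j => edgeDeviation (hW.pairDensity n) G s(i, j)) z.1 z.2)
        + ∫ z in S ×ˢ T, (barStep n W z.1 z.2 - W z.1 z.2) := by
    rw [← integral_add ((integrableOn_stepKernel _ volume_unitSquare_ne_top).mono_set hST)
      (error_integrable.mono_set hST)]
    simp only [← graphonOfGraph_sub_barStep, sub_add_sub_cancel]
  calc |∫ z in S ×ˢ T, (graphonOfGraph G z.1 z.2 - W z.1 z.2)|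
      ≤ |∫ z in S ×ˢ T,
          stepKernel (fun i j => edgeDeviation (hW.pairDensity n) G s(i, j)) z.1 z.2|
        + |∫ z in S ×ˢ T, (barStep n W z.1 z.2 - W z.1 z.2)| := decompose ▸ abs_add_le _ _
    _ ≤ η + ∫ z in unitSquare, |barStep n W z.1 z.2 - W z.1 z.2| := by
      gcongr
      · exact abs_setIntegral_prod_stepKernel_le hn hη hG (volume_ne_top hS) (volume_ne_top hT)
      · exact abs_integral_le_integral_abs.trans (setIntegral_mono_set error_integrable.abs
          (ae_of_all _ fun _ => abs_nonneg _) (LE.le.eventuallyLE hST))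

end CutDistance

section StepApproximation

lemma integral_abs_sub_average_le {α : Type*} [MeasurableSpace α] {μ : Measure α}
    [IsFiniteMeasure μ] {f : α → ℝ} (hf : Integrable f μ) (c : ℝ) :
    ∫ x, |(⨍ y, f y ∂μ) - f x| ∂μ ≤ 2 * ∫ x, |c - f x| ∂μ := by
  have dist_le : μ.real univ * |(⨍ y, f y ∂μ) - c| ≤ ∫ x, |c - f x| ∂μ := by
    have : μ.real univ * ((⨍ y, f y ∂μ) - c) = ∫ x, (f x - c) ∂μ := by
      rw [integral_sub hf (integrable_const c), integral_const, ← measure_smul_average μ f,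
        smul_eq_mul, smul_eq_mul, mul_sub]
    rw [← abs_of_nonneg measureReal_nonneg, ← abs_mul, this]
    simpa only [abs_sub_comm] using abs_integral_le_integral_abs (f := fun x => f x - c) (μ := μ)
  have abs_integrable (a : ℝ) : Integrable (fun x => |a - f x|) μ :=
    ((integrable_const a).sub hf).abs
  calc ∫ x, |(⨍ y, f y ∂μ) - f x| ∂μ
      ≤ ∫ x, (|(⨍ y, f y ∂μ) - c| + |c - f x|) ∂μ :=
        integral_mono (abs_integrable _) ((integrable_const _).add (abs_integrable c))
          fun x => abs_sub_le _ _ _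
    _ = μ.real univ * |(⨍ y, f y ∂μ) - c| + ∫ x, |c - f x| ∂μ := by
        rw [integral_add (integrable_const _) (abs_integrable c), integral_const, smul_eq_mul]
    _ ≤ 2 * ∫ x, |c - f x| ∂μ := by linarith

variable {W : ℝ → ℝ → ℝ}

lemma integral_abs_barStep_sub_le {n : ℕ} (hn : n ≠ 0)
    (hW : IntegrableOn (fun z : ℝ × ℝ => W z.1 z.2) unitSquare) (X : Fin n → Fin n → ℝ) :
    ∫ z in unitSquare, |barStep n W z.1 z.2 - W z.1 z.2|
      ≤ 2 * ∫ z in unitSquare, |stepKernel X z.1 z.2 - W z.1 z.2| := by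
  have error_integrable (Y : Fin n → Fin n → ℝ) :
      IntegrableOn (fun z => |stepKernel Y z.1 z.2 - W z.1 z.2|) unitSquare :=
    ((integrableOn_stepKernel _ volume_unitSquare_ne_top).sub hW).abs
  have error_on_block (Y : Fin n → Fin n → ℝ) (q : Fin n × Fin n) :
      ∫ z in gridBlock n q, |stepKernel Y z.1 z.2 - W z.1 z.2|
        = ∫ z in gridBlock n q, |Y q.1 q.2 - W z.1 z.2| :=
    setIntegral_congr_fun (measurableSet_gridBlock q) fun z hz => by
      simp only [stepKernel_apply_of_mem Y hz.1 hz.2]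
  rw [barStep_eq_stepKernel, setIntegral_unitSquare_eq_sum hn (error_integrable _),
    setIntegral_unitSquare_eq_sum hn (error_integrable _), Finset.mul_sum]
  refine Finset.sum_le_sum fun q _ => ?_
  rw [error_on_block, error_on_block]
  have : IsFiniteMeasure (volume.restrict (gridBlock n q)) :=
    isFiniteMeasure_restrict.2 (measure_gridBlock_ne_top q)
  exact integral_abs_sub_average_le (hW.mono_set (gridBlock_subset_unitSquare q)) _

lemma dist_le_of_mem_gridBlock {n : ℕ} {q : Fin n × Fin n} {z : ℝ × ℝ} (hz : z ∈ gridBlock n q) :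
    dist ((q.1 : ℝ) / n, (q.2 : ℝ) / n) z ≤ 1 / n := by
  have dist_le {i : Fin n} {x : ℝ} (hx : x ∈ gridInterval n i) : dist ((i : ℝ) / n) x ≤ 1 / n := by
    obtain ⟨lower, upper⟩ := hx
    rw [add_div] at upper
    rw [Real.dist_eq, abs_le]
    constructor <;> linarith
  exact max_le (dist_le hz.1) (dist_le hz.2)

lemma eventually_integral_abs_stepKernel_sub_le {g : ℝ × ℝ → ℝ} (hg : UniformContinuous g)
    {ε : ℝ} (hε : 0 < ε) : ∀ᶠ n : ℕ in atTop, ∃ X : Fin n → Fin n → ℝ,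
      ∫ z in unitSquare, |stepKernel X z.1 z.2 - g z| ≤ ε := by
  obtain ⟨r, hr, dist_lt⟩ := Metric.uniformContinuous_iff.1 hg ε hε
  filter_upwards [tendsto_one_div_atTop_nhds_zero_nat.eventually_lt_const hr,
    eventually_ne_atTop 0] with n hn hn0
  let X (i j : Fin n) : ℝ := g (i / n, j / n)
  have error_integrable : IntegrableOn (fun z => |stepKernel X z.1 z.2 - g z|) unitSquare :=
    ((integrableOn_stepKernel X volume_unitSquare_ne_top).sub
      (hg.continuous.continuousOn.integrableOn_compact (isCompact_Icc.prod isCompact_Icc))).abs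
  have block_error (q : Fin n × Fin n) :
      ∫ z in gridBlock n q, |stepKernel X z.1 z.2 - g z| ≤ ((n : ℝ) ^ 2)⁻¹ * ε := by
    rw [← volume_real_gridBlock q, ← smul_eq_mul, ← setIntegral_const]
    refine setIntegral_mono_on (error_integrable.mono_set (gridBlock_subset_unitSquare q))
      (integrableOn_const (measure_gridBlock_ne_top q)) (measurableSet_gridBlock q) fun z hz => ?_
    rw [stepKernel_apply_of_mem X hz.1 hz.2]
    exact (dist_lt ((dist_le_of_mem_gridBlock hz).trans_lt hn)).le
  refine ⟨X, ?_⟩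
  rw [setIntegral_unitSquare_eq_sum hn0 error_integrable]
  refine (Finset.sum_le_sum fun q _ => block_error q).trans_eq ?_
  rw [Finset.sum_const, Finset.card_univ, Fintype.card_prod, Fintype.card_fin, nsmul_eq_mul,
    Nat.cast_mul, ← sq]
  field_simp

theorem tendsto_integral_abs_barStep_sub
    (hW : IntegrableOn (fun z : ℝ × ℝ => W z.1 z.2) unitSquare) :
    Tendsto (fun n => ∫ z in unitSquare, |barStep n W z.1 z.2 - W z.1 z.2|) atTop (nhds 0) := by
  refine Metric.tendsto_nhds.2 fun ε hε => ?_
  obtain ⟨g, g_support, g_close, g_cont, g_integrable⟩ :=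
    Integrable.exists_hasCompactSupport_integral_sub_le hW (ε := ε / 8) (by positivity)
  have g_unif := g_support.uniformContinuous_of_continuous g_cont
  filter_upwards [eventually_integral_abs_stepKernel_sub_le g_unif (ε := ε / 8) (by positivity),
    eventually_ne_atTop 0] with n ⟨X, X_close⟩ hn0
  have X_integrable := integrableOn_stepKernel X volume_unitSquare_ne_top
  have triangle : ∫ z in unitSquare, |stepKernel X z.1 z.2 - W z.1 z.2|
      ≤ (∫ z in unitSquare, |stepKernel X z.1 z.2 - g z|)
        + ∫ z in unitSquare, |W z.1 z.2 - g z| := by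
    have X_error : IntegrableOn (fun z => |stepKernel X z.1 z.2 - g z|) unitSquare :=
      (X_integrable.sub g_integrable).abs
    have g_error : IntegrableOn (fun z => |W z.1 z.2 - g z|) unitSquare :=
      (hW.sub g_integrable).abs
    rw [← integral_add X_error g_error]
    refine integral_mono (X_integrable.sub hW).abs (X_error.add g_error) fun z => ?_
    exact (abs_sub_le _ (g z) _).trans_eq (congrArg _ (abs_sub_comm _ _))
  simp only [Real.norm_eq_abs] at g_close
  rw [Real.dist_0_eq_abs, abs_of_nonneg (integral_nonneg fun _ => abs_nonneg _)]
  linarith [integral_abs_barStep_sub_le hn0 hW X]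

end StepApproximation

section GraphonEntropy

lemma continuous_binEnt : Continuous binEnt := by
  rw [funext binEnt_eq_binEntropy_div_log_two]
  exact Real.binEntropy_continuous.div_const _

lemma binEnt_nonneg {x : ℝ} (hx : x ∈ Icc (0 : ℝ) 1) : 0 ≤ binEnt x := by
  rw [binEnt_eq_binEntropy_div_log_two]
  exact div_nonneg (Real.binEntropy_nonneg hx.1 hx.2) (Real.log_nonneg one_le_two)

lemma binEnt_le_one (x : ℝ) : binEnt x ≤ 1 := by
  rw [binEnt_eq_binEntropy_div_log_two, div_le_one (Real.log_pos one_lt_two)]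
  exact Real.binEntropy_le_log_two

lemma concaveOn_binEnt : ConcaveOn ℝ (Icc 0 1) binEnt := by
  have : binEnt = (Real.log 2)⁻¹ • Real.binEntropy :=
    funext fun x => by simp [binEnt_eq_binEntropy_div_log_two, div_eq_inv_mul]
  rw [this]
  exact Real.strictConcave_binEntropy.concaveOn.smul (by positivity)

variable {n : ℕ} {W : ℝ → ℝ → ℝ}

lemma IsGraphon.integrableOn_binEnt (hW : IsGraphon W) :
    IntegrableOn (fun z : ℝ × ℝ => binEnt (W z.1 z.2)) unitSquare :=
  hW.integrableOn_comp continuous_binEnt.measurable fun x hx =>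
    (abs_of_nonneg (binEnt_nonneg hx)).trans_le (binEnt_le_one x)

lemma IsGraphon.graphonEnt_eq (hW : IsGraphon W) :
    graphonEnt W = ∫ z in unitSquare, binEnt (W z.1 z.2) :=
  (setIntegral_prod _ hW.integrableOn_binEnt).symm

lemma IsGraphon.graphonEnt_nonneg (hW : IsGraphon W) : 0 ≤ graphonEnt W := by
  rw [hW.graphonEnt_eq]
  exact integral_nonneg fun _ => binEnt_nonneg (hW.2.2 _ _)

lemma measure_gridBlock_ne_zero (q : Fin n × Fin n) : volume (gridBlock n q) ≠ 0 := by
  have hn : (0 : ℝ) < n := by exact_mod_cast q.1.pos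
  intro h
  have := volume_real_gridBlock q
  rw [measureReal_def, h, ENNReal.toReal_zero] at this
  exact absurd this (by positivity)

lemma IsGraphon.blockAverage_mem_Icc (hW : IsGraphon W) (i j : Fin n) :
    blockAverage n W i j ∈ Icc (0 : ℝ) 1 :=
  (convex_Icc 0 1).set_average_mem isClosed_Icc (measure_gridBlock_ne_zero (i, j))
    (measure_gridBlock_ne_top _) (ae_of_all _ fun _ => hW.2.2 _ _)
    (hW.integrableOn.mono_set (gridBlock_subset_unitSquare _))

lemma IsGraphon.pairDensity_mem_Icc (hW : IsGraphon W) (e : Sym2 (Fin n)) :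
    hW.pairDensity n e ∈ Icc (0 : ℝ) 1 :=
  e.ind fun i j => hW.blockAverage_mem_Icc i j

lemma IsGraphon.setIntegral_gridBlock_binEnt_le (hW : IsGraphon W) (i j : Fin n) :
    ∫ z in gridBlock n (i, j), binEnt (W z.1 z.2)
      ≤ ((n : ℝ) ^ 2)⁻¹ * binEnt (blockAverage n W i j) := by
  have block_subset := gridBlock_subset_unitSquare (i, j)
  have jensen := concaveOn_binEnt.le_map_set_average continuous_binEnt.continuousOn isClosed_Icc
    (measure_gridBlock_ne_zero (i, j)) (measure_gridBlock_ne_top _)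
    (ae_of_all _ fun z => hW.2.2 z.1 z.2) (hW.integrableOn.mono_set block_subset)
    (hW.integrableOn_binEnt.mono_set block_subset)
  rw [← measure_smul_setAverage _ (measure_gridBlock_ne_top _), smul_eq_mul, volume_real_gridBlock]
  gcongr
  exact jensen

lemma IsGraphon.sq_mul_graphonEnt_le (hW : IsGraphon W) (n : ℕ) :
    n ^ 2 * graphonEnt W ≤ ∑ i : Fin n, ∑ j, binEnt (blockAverage n W i j) := by
  obtain rfl | hn := eq_or_ne n 0
  · simp
  rw [hW.graphonEnt_eq, setIntegral_unitSquare_eq_sum hn hW.integrableOn_binEnt,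
    Fintype.sum_prod_type, Finset.mul_sum]
  refine Finset.sum_le_sum fun i _ => ?_
  rw [Finset.mul_sum]
  refine Finset.sum_le_sum fun j _ => ?_
  rw [← le_inv_mul_iff₀ (by positivity)]
  exact hW.setIntegral_gridBlock_binEnt_le i j

end GraphonEntropy

section Counting

variable {n : ℕ} {W : ℝ → ℝ → ℝ}

open Classical in
lemma IsGraphon.choose2_mul_graphonEnt_le (hW : IsGraphon W) (A : Finset (SimpleGraph (Fin n))) :
    choose2 n * graphonEnt W ≤ n / 2 + 1 + Real.logb 2 A.card +
      (∑ G ∈ Aᶜ, bernoulliWeight (hW.pairDensity n) G) * choose2 n := by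
  have edges := sum_binEnt_le_logb_card_add hW.pairDensity_mem_Icc A
  have loops : ∑ i : Fin n, binEnt (blockAverage n W i i) ≤ n := by
    simpa using Finset.sum_le_card_nsmul Finset.univ _ _
      fun (i : Fin n) _ => binEnt_le_one (blockAverage n W i i)
  have cells := hW.sq_mul_graphonEnt_le n
  have pairs := sum_sum_sym2_mk fun e => binEnt (hW.pairDensity n e)
  simp only [hW.pairDensity_mk, nsmul_eq_mul, Nat.cast_ofNat] at pairs
  rw [card_edgeFinset_top_fin] at edges
  have choose2_le : choose2 n * graphonEnt W ≤ n ^ 2 * graphonEnt W / 2 := by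
    rw [choose2]
    nlinarith [mul_nonneg (Nat.cast_nonneg (α := ℝ) n) hW.graphonEnt_nonneg]
  linarith

open Classical in
lemma IsGraphon.card_fourCycleDeviation_le_le_NhatCut (hW : IsGraphon W) (hn : n ≠ 0) {δ η : ℝ}
    (hη : 0 ≤ η) (herr : ∫ z in unitSquare, |barStep n W z.1 z.2 - W z.1 z.2| ≤ δ - η) :
    Finset.card {G | fourCycleDeviation (hW.pairDensity n) G ≤ η ^ 4 * n ^ 4} ≤ NhatCut n δ W := by
  rw [NhatCut, Nat.card_eq_fintype_card, Fintype.card_subtype]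
  refine Finset.card_le_card (Finset.monotone_filter_right _ fun G _ hG => ?_)
  linarith [dCut_graphonOfGraph_le hn hW hη hG]

lemma logb_two_natCast_mono {a b : ℕ} (h : a ≤ b) : Real.logb 2 a ≤ Real.logb 2 b := by
  obtain rfl | ha := a.eq_zero_or_pos
  · simpa [Real.logb] using div_nonneg (Real.log_natCast_nonneg b) (Real.log_nonneg one_le_two)
  · exact Real.logb_le_logb_of_le one_lt_two (by exact_mod_cast ha) (by exact_mod_cast h)

lemma choose2_pos (hn : 2 ≤ n) : 0 < choose2 n := by
  have : (2 : ℝ) ≤ n := by exact_mod_cast hn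
  exact div_pos (mul_pos (by linarith) (by linarith)) two_pos

lemma half_add_one_div_choose2_le (hn : 2 ≤ n) : (n / 2 + 1) / choose2 n ≤ 4 / n := by
  have : (2 : ℝ) ≤ n := by exact_mod_cast hn
  rw [div_le_div_iff₀ (choose2_pos hn) (by linarith), choose2]
  nlinarith

theorem IsGraphon.graphonEnt_sub_le_logb_NhatCut_div (hW : IsGraphon W) (hn : 2 ≤ n) {δ : ℝ}
    (hδ : 0 < δ) (herr : ∫ z in unitSquare, |barStep n W z.1 z.2 - W z.1 z.2| ≤ δ / 2) :
    graphonEnt W - (4 + 96 / δ ^ 4) / n ≤ Real.logb 2 (NhatCut n δ W) / choose2 n := by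
  classical
  have hn0 : n ≠ 0 := by omega
  have hC := choose2_pos hn
  set A : Finset (SimpleGraph (Fin n)) :=
    {G | fourCycleDeviation (hW.pairDensity n) G ≤ (δ / 2) ^ 4 * n ^ 4}
  have logb_card_le : Real.logb 2 A.card ≤ Real.logb 2 (NhatCut n δ W) :=
    logb_two_natCast_mono
      (hW.card_fourCycleDeviation_le_le_NhatCut hn0 (by positivity) (by linarith))
  have markov : ∑ G ∈ Aᶜ, bernoulliWeight (hW.pairDensity n) G ≤ 96 / δ ^ 4 / n := by
    have := sum_bernoulliWeight_fourCycleDeviation_gt_le (p := hW.pairDensity n)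
      hW.pairDensity_mem_Icc (c := (δ / 2) ^ 4 * n ^ 4) (by positivity)
    simp only [A, Finset.compl_filter, not_le]
    refine this.trans_eq ?_
    rw [Fintype.card_fin]
    field_simp
    norm_num
  have entropy_bound : choose2 n * graphonEnt W ≤ n / 2 + 1 + Real.logb 2 (NhatCut n δ W) +
      96 / δ ^ 4 / n * choose2 n := by
    linarith [hW.choose2_mul_graphonEnt_le A, mul_le_mul_of_nonneg_right markov hC.le]
  calc graphonEnt W - (4 + 96 / δ ^ 4) / n
      ≤ graphonEnt W - (n / 2 + 1) / choose2 n - 96 / δ ^ 4 / n := by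
        rw [add_div]
        linarith [half_add_one_div_choose2_le hn]
    _ ≤ Real.logb 2 (NhatCut n δ W) / choose2 n := by
        rw [le_div_iff₀ hC, sub_mul, sub_mul, div_mul_cancel₀ _ hC.ne']
        linarith

lemma NhatCut_le_card_simpleGraph (n : ℕ) (δ : ℝ) (W : ℝ → ℝ → ℝ) :
    NhatCut n δ W ≤ Fintype.card (SimpleGraph (Fin n)) := by
  rw [NhatCut, ← Nat.card_eq_fintype_card]
  exact Finite.card_subtype_le _

lemma logb_NhatCut_div_choose2_le_one (hn : 2 ≤ n) (δ : ℝ) (W : ℝ → ℝ → ℝ) :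
    Real.logb 2 (NhatCut n δ W) / choose2 n ≤ 1 := by
  rw [div_le_one (choose2_pos hn)]
  refine (logb_two_natCast_mono (NhatCut_le_card_simpleGraph n δ W)).trans_eq ?_
  rw [card_simpleGraph, Nat.cast_pow, Nat.cast_two, Real.logb_pow, Real.logb_self_eq_one one_lt_two,
    mul_one, card_edgeFinset_top_fin]

end Counting

/-- Lemma 4.4: `liminf_n log₂ N̂_□(n,δ;W) / C(n,2) ≥ Ent(W)`. -/
theorem stmt5 (W : ℝ → ℝ → ℝ) (hW : IsGraphon W) (δ : ℝ) (hδ : 0 < δ) :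
    graphonEnt W ≤
      Filter.liminf (fun n : ℕ => Real.logb 2 (NhatCut n δ W : ℝ) / choose2 n)
        Filter.atTop := by
  have lower_tendsto : Tendsto (fun n : ℕ => graphonEnt W - (4 + 96 / δ ^ 4) / n) atTop
      (nhds (graphonEnt W)) := by
    simpa using (tendsto_const_div_atTop_nhds_zero_nat (4 + 96 / δ ^ 4)).const_sub (graphonEnt W)
  have lower_le : ∀ᶠ n : ℕ in atTop,
      graphonEnt W - (4 + 96 / δ ^ 4) / n ≤ Real.logb 2 (NhatCut n δ W) / choose2 n := by
    filter_upwards [eventually_ge_atTop 2,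
      (tendsto_integral_abs_barStep_sub hW.integrableOn).eventually_le_const (half_pos hδ)]
      with n hn herr using hW.graphonEnt_sub_le_logb_NhatCut_div hn hδ herr
  have upper_le : ∀ᶠ n : ℕ in atTop, Real.logb 2 (NhatCut n δ W) / choose2 n ≤ 1 :=
    (eventually_ge_atTop 2).mono fun n hn => logb_NhatCut_div_choose2_le_one hn δ W
  rw [← lower_tendsto.liminf_eq]
  exact liminf_le_liminf lower_le lower_tendsto.isBoundedUnder_ge
    (isBoundedUnder_of_eventually_le upper_le).isCoboundedUnder_ge

end
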